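/- arXiv:0709.0242 — 5 statements merged into one kernel-verified Lean document; each statement's English description precedes it below -/
import Mathlib

section
/- Let U ⊆ ℝ^{2n} be open with coordinates (λ_1,…,λ_n,μ_1,…,μ_n), let H_1,…,H_n : U → ℝ be smooth, and suppose there exist smooth 'separated relations' Φ_1,…,Φ_n : ℝ × ℝ × ℝ^n → ℝ such that Φ_i(λ_i, μ_i, H_1,…,H_n) = 0 identically on U for each i = 1,…,n, and such that the n×n matrix with entries M_{ij} = (∂Φ_i/∂h_j)(λ_i, μ_i, H_1,…,H_n) is invertible at every point of U. Then for every k ∈ ℕ and all a, b ∈ {1,…,n}, the functions are in involution: {H_a, H_b}_k = 0 on U. In particular the H_a are in bi-involution with respect to the compatible brackets {·,·}_0 and {·,·}_1. -/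
/-!
STATEMENT 1: If smooth functions H_1,…,H_n on an open set U ⊆ ℝ^{2n} satisfy separated
relations Φ_i(λ_i, μ_i, H_1,…,H_n) = 0 with the matrix (∂Φ_i/∂h_j) invertible on U, then
for every k the functions H_a are in involution with respect to the bracket
{f,g}_k = Σ_i λ_i^{2k} (∂f/∂λ_i ∂g/∂μ_i − ∂f/∂μ_i ∂g/∂λ_i); in particular they are in
bi-involution with respect to the compatible brackets {·,·}_0 and {·,·}_1.
-/

noncomputable section

/-- The phase space with coordinates (λ_1,…,λ_n,μ_1,…,μ_n). -/
abbrev Pt (n : ℕ) := (Fin n → ℝ) × (Fin n → ℝ)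

/-- Partial derivative in the coordinate λ_i. -/
noncomputable def dLam {n : ℕ} (i : Fin n) (f : Pt n → ℝ) (x : Pt n) : ℝ :=
  fderiv ℝ f x (Pi.single i 1, 0)

/-- Partial derivative in the coordinate μ_i. -/
noncomputable def dMu {n : ℕ} (i : Fin n) (f : Pt n → ℝ) (x : Pt n) : ℝ :=
  fderiv ℝ f x (0, Pi.single i 1)

/-- The bracket `{f,g}_k = Σ_i λ_i^{2k} (∂f/∂λ_i ∂g/∂μ_i − ∂f/∂μ_i ∂g/∂λ_i)`. -/
noncomputable def pbk (n k : ℕ) (f g : Pt n → ℝ) (x : Pt n) : ℝ :=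
  ∑ i : Fin n, (x.1 i) ^ (2 * k) *
    (dLam i f x * dMu i g x - dMu i f x * dLam i g x)

theorem statement1 (n : ℕ) (hn : 1 ≤ n)
    (U : Set (Pt n)) (hU : IsOpen U)
    (H : Fin n → Pt n → ℝ) (hH : ∀ a : Fin n, ContDiffOn ℝ (⊤ : ℕ∞) (H a) U)
    (Φ : Fin n → ℝ × ℝ × (Fin n → ℝ) → ℝ) (hΦ : ∀ i : Fin n, ContDiff ℝ (⊤ : ℕ∞) (Φ i))
    (hrel : ∀ i : Fin n, ∀ x ∈ U, Φ i (x.1 i, x.2 i, fun a => H a x) = 0)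
    (hM : ∀ x ∈ U,
      (Matrix.of fun i j : Fin n =>
        fderiv ℝ (Φ i) (x.1 i, x.2 i, fun a => H a x) (0, 0, Pi.single j 1)).det ≠ 0) :
    ∀ k : ℕ, ∀ a b : Fin n, ∀ x ∈ U, pbk n k (H a) (H b) x = 0 := by
  intro k a b x hx
  have hUx : U ∈ nhds x := hU.mem_nhds hx
  have hHd : ∀ c, HasFDerivAt (H c) (fderiv ℝ (H c) x) x := fun c =>
    (((hH c).contDiffAt hUx).differentiableAt (by simp)).hasFDerivAt
  set M : Matrix (Fin n) (Fin n) ℝ := Matrix.of fun i j : Fin n =>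
        fderiv ℝ (Φ i) (x.1 i, x.2 i, fun a => H a x) (0, 0, Pi.single j 1) with hMdef
  have hdet : IsUnit M.det := isUnit_iff_ne_zero.mpr (hM x hx)
  -- differentiate the separated relations
  have key : ∀ (i : Fin n) (v : Pt n),
      fderiv ℝ (Φ i) (x.1 i, x.2 i, fun a => H a x)
        (v.1 i, v.2 i, fun c => fderiv ℝ (H c) x v) = 0 := by
    intro i v
    have h1 : HasFDerivAt (fun y : Pt n => y.1 i)
        ((ContinuousLinearMap.proj i).comp (ContinuousLinearMap.fst ℝ (Fin n → ℝ) (Fin n → ℝ))) x :=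
      ((ContinuousLinearMap.proj (R := ℝ) (φ := fun _ : Fin n => ℝ) i).comp
        (ContinuousLinearMap.fst ℝ (Fin n → ℝ) (Fin n → ℝ))).hasFDerivAt
    have h2 : HasFDerivAt (fun y : Pt n => y.2 i)
        ((ContinuousLinearMap.proj i).comp (ContinuousLinearMap.snd ℝ (Fin n → ℝ) (Fin n → ℝ))) x :=
      ((ContinuousLinearMap.proj (R := ℝ) (φ := fun _ : Fin n => ℝ) i).comp
        (ContinuousLinearMap.snd ℝ (Fin n → ℝ) (Fin n → ℝ))).hasFDerivAt
    have h3 : HasFDerivAt (fun y : Pt n => fun c => H c y)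
        (ContinuousLinearMap.pi fun c => fderiv ℝ (H c) x) x := hasFDerivAt_pi.mpr hHd
    have hP : HasFDerivAt (Φ i) (fderiv ℝ (Φ i) (x.1 i, x.2 i, fun a => H a x))
        (x.1 i, x.2 i, fun a => H a x) :=
      ((hΦ i).differentiable (by simp) _).hasFDerivAt
    have h4 := HasFDerivAt.comp x (f := fun y : Pt n => (y.1 i, y.2 i, fun c => H c y)) hP
      (h1.prodMk (h2.prodMk h3))
    have h5 : HasFDerivAt (Φ i ∘ fun y : Pt n => (y.1 i, y.2 i, fun c => H c y))
        (0 : Pt n →L[ℝ] ℝ) x := by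
      refine (hasFDerivAt_const (0 : ℝ) x).congr_of_eventuallyEq ?_
      filter_upwards [hUx] with y hy using hrel i y hy
    have h6 := congrArg (fun T : Pt n →L[ℝ] ℝ => T v) (h4.unique h5)
    exact h6
  have expand : ∀ (i : Fin n) (s t : ℝ) (w : Fin n → ℝ),
      fderiv ℝ (Φ i) (x.1 i, x.2 i, fun a => H a x) (s, t, w) =
        s * fderiv ℝ (Φ i) (x.1 i, x.2 i, fun a => H a x) (1, 0, 0) +
        t * fderiv ℝ (Φ i) (x.1 i, x.2 i, fun a => H a x) (0, 1, 0) + M.mulVec w i := by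
    intro i s t w
    have hw : ((s, t, w) : ℝ × ℝ × (Fin n → ℝ)) = s • ((1, 0, 0) : ℝ × ℝ × (Fin n → ℝ)) +
        t • ((0, 1, 0) : ℝ × ℝ × (Fin n → ℝ)) +
        ∑ j, w j • ((0, 0, Pi.single j 1) : ℝ × ℝ × (Fin n → ℝ)) := by
      refine Prod.ext ?_ (Prod.ext ?_ ?_)
      · simp [Prod.fst_sum]
      · simp [Prod.fst_sum, Prod.snd_sum]
      · ext l
        simp [Prod.snd_sum, Finset.sum_apply, Pi.single_apply]
    rw [hw, map_add, map_add, map_sum]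
    simp only [map_smul, smul_eq_mul, Matrix.mulVec, dotProduct, hMdef, Matrix.of_apply]
    congr 1
    exact Finset.sum_congr rfl fun j _ => mul_comm _ _
  -- solve a linear system with a single nonzero right-hand side
  have solve : ∀ (l : Fin n) (w : Fin n → ℝ) (r : ℝ),
      M.mulVec w = Pi.single l r → ∀ c, w c = M⁻¹ c l * r := by
    intro l w r h c
    have h' := congrArg (fun u => M⁻¹.mulVec u c) h
    simpa [Matrix.mulVec_mulVec, Matrix.nonsing_inv_mul M hdet] using h'
  have hL : ∀ l c, dLam l (H c) x =
      M⁻¹ c l * -(fderiv ℝ (Φ l) (x.1 l, x.2 l, fun a => H a x) (1, 0, 0)) := by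
    intro l
    refine solve l (fun c => dLam l (H c) x) _ ?_
    ext i
    have h := key i (Pi.single l 1, 0)
    rw [expand] at h
    change _ + _ + M.mulVec (fun c => dLam l (H c) x) i = 0 at h
    by_cases hil : i = l
    · subst hil
      simp at h ⊢
      linarith
    · simpa [hil] using h
  have hN : ∀ l c, dMu l (H c) x =
      M⁻¹ c l * -(fderiv ℝ (Φ l) (x.1 l, x.2 l, fun a => H a x) (0, 1, 0)) := by
    intro l
    refine solve l (fun c => dMu l (H c) x) _ ?_
    ext i
    have h := key i (0, Pi.single l 1)
    rw [expand] at h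
    change _ + _ + M.mulVec (fun c => dMu l (H c) x) i = 0 at h
    by_cases hil : i = l
    · subst hil
      simp at h ⊢
      linarith
    · simpa [hil] using h
  unfold pbk
  refine Finset.sum_eq_zero fun i _ => ?_
  rw [hL, hL, hN, hN]
  ring
end
end

section
/- The cubic bracket {·,·}_1 on polynomials in s_1, s_2, s_3, defined by {s_i,s_j}_1 = ε_{ijk} s_k ((s_3+c)² − 2a_1(s_1+ i s_2)(s_3+c) − 2a_0(s_1+ i s_2)), satisfies the Jacobi identity {f,{g,h}}_1 + {g,{h,f}}_1 + {h,{f,g}}_1 = 0 for all polynomials f, g, h. -/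
/-!
STATEMENT 2: The cubic bracket {·,·}_1 on polynomials in s_1, s_2, s_3 over ℂ, defined by
{s_i,s_j}_1 = ε_{ijk} s_k ((s_3+c)² − 2a_1(s_1+ i s_2)(s_3+c) − 2a_0(s_1+ i s_2)),
satisfies the Jacobi identity.
-/

noncomputable section
open MvPolynomial

/-- Polynomials in the three variables s_1, s_2, s_3 over ℂ. -/
abbrev P3 := MvPolynomial (Fin 3) ℂ

/-- The bracket on polynomials associated with a Poisson structure matrix `π`:
`{f,g} = Σ_{i,j} π i j ∂_i f ∂_j g`. -/
noncomputable def sbr3 (π : Fin 3 → Fin 3 → P3) (f g : P3) : P3 :=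
  ∑ i : Fin 3, ∑ j : Fin 3, π i j * pderiv i f * pderiv j g

/-- The cubic factor W = (s_3+c)² − 2a_1(s_1+ i s_2)(s_3+c) − 2a_0(s_1+ i s_2). -/
noncomputable def Wfac (a0 a1 c : ℂ) : P3 :=
  (X 2 + C c) ^ 2 - C (2 * a1) * (X 0 + C Complex.I * X 1) * (X 2 + C c)
    - C (2 * a0) * (X 0 + C Complex.I * X 1)

/-- The sl(2) Lie–Poisson structure matrix: {s_i,s_j}_0 = ε_{ijk} s_k. -/
noncomputable def pi30 : Fin 3 → Fin 3 → P3 := fun i j =>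
  !![0, X 2, -(X 1); -(X 2), 0, X 0; X 1, -(X 0), 0] i j

/-- The cubic structure matrix: {s_i,s_j}_1 = ε_{ijk} s_k · W. -/
noncomputable def pi31 (a0 a1 c : ℂ) : Fin 3 → Fin 3 → P3 := fun i j =>
  pi30 i j * Wfac a0 a1 c

theorem pderiv_swap_aux (i j : Fin 3) (f : P3) :
    pderiv i (pderiv j f) = pderiv j (pderiv i f) := by
  have h : ⁅pderiv (R := ℂ) i, pderiv (R := ℂ) j⁆ = 0 := by
    apply MvPolynomial.derivation_ext
    intro k
    rw [Derivation.commutator_apply]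
    simp [pderiv_X, Pi.single_apply, apply_ite]
  have h2 := congrArg (fun D => D f) h
  simp only [Derivation.commutator_apply, Derivation.zero_apply] at h2
  exact sub_eq_zero.mp h2

theorem sbr3_aux (a0 a1 c : ℂ) (f g : P3) :
    sbr3 (pi31 a0 a1 c) f g = Wfac a0 a1 c *
      (X 2 * (pderiv 0 f * pderiv 1 g - pderiv 1 f * pderiv 0 g)
      + X 0 * (pderiv 1 f * pderiv 2 g - pderiv 2 f * pderiv 1 g)
      + X 1 * (pderiv 2 f * pderiv 0 g - pderiv 0 f * pderiv 2 g)) := by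
  simp [sbr3, pi31, pi30, Fin.sum_univ_three]
  ring

theorem statement2 (a0 a1 c : ℂ) (f g h : P3) :
    sbr3 (pi31 a0 a1 c) f (sbr3 (pi31 a0 a1 c) g h)
      + sbr3 (pi31 a0 a1 c) g (sbr3 (pi31 a0 a1 c) h f)
      + sbr3 (pi31 a0 a1 c) h (sbr3 (pi31 a0 a1 c) f g) = 0 := by
  simp only [sbr3_aux]
  generalize Wfac a0 a1 c = W
  have e00 : pderiv (R := ℂ) (0 : Fin 3) (X 0) = 1 := pderiv_X_self 0
  have e11 : pderiv (R := ℂ) (1 : Fin 3) (X 1) = 1 := pderiv_X_self 1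
  have e22 : pderiv (R := ℂ) (2 : Fin 3) (X 2) = 1 := pderiv_X_self 2
  have e01 : pderiv (R := ℂ) (0 : Fin 3) (X 1) = 0 := pderiv_X_of_ne (by decide)
  have e02 : pderiv (R := ℂ) (0 : Fin 3) (X 2) = 0 := pderiv_X_of_ne (by decide)
  have e10 : pderiv (R := ℂ) (1 : Fin 3) (X 0) = 0 := pderiv_X_of_ne (by decide)
  have e12 : pderiv (R := ℂ) (1 : Fin 3) (X 2) = 0 := pderiv_X_of_ne (by decide)
  have e20 : pderiv (R := ℂ) (2 : Fin 3) (X 0) = 0 := pderiv_X_of_ne (by decide)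
  have e21 : pderiv (R := ℂ) (2 : Fin 3) (X 1) = 0 := pderiv_X_of_ne (by decide)
  simp only [Derivation.leibniz, map_add, map_sub, smul_eq_mul, e00, e11, e22, e01, e02, e10,
    e12, e20, e21, pderiv_swap_aux 1 0, pderiv_swap_aux 2 0, pderiv_swap_aux 2 1]
  ring

end
end

section
/- The Kowalevski integrals on so*(4) are in involution with respect to the Lie–Poisson bracket: {H_1, H_2}_0 = 0, where H_1 = J_1² + J_2² + 2J_3² − 2b x_1 and H_2 = (J_+² + 2b x_+ − 𝒫b²)(J_−² + 2b x_− − 𝒫b²). -/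
/-!
STATEMENT 9: The Kowalevski integrals on so*(4) are in involution with respect to the
Lie–Poisson bracket: {H_1, H_2}_0 = 0, where H_1 = J_1² + J_2² + 2J_3² − 2b x_1 and
H_2 = (J_+² + 2b x_+ − 𝒫b²)(J_−² + 2b x_− − 𝒫b²).
Coordinates: index 0,1,2 ↔ x_1,x_2,x_3 and index 3,4,5 ↔ J_1,J_2,J_3.
-/

noncomputable section
open MvPolynomial

/-- Polynomials in the six coordinates x_1,x_2,x_3,J_1,J_2,J_3 over ℂ. -/
abbrev P6 := MvPolynomial (Fin 6) ℂ

/-- The bracket on polynomials associated with a Poisson structure matrix `π`: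
`{f,g} = Σ_{i,j} π i j ∂_i f ∂_j g`. -/
noncomputable def sbr6 (π : Fin 6 → Fin 6 → P6) (f g : P6) : P6 :=
  ∑ i : Fin 6, ∑ j : Fin 6, π i j * pderiv i f * pderiv j g

/-- The so*(4) Lie–Poisson structure matrix: {J_i,J_j} = ε_{ijk}J_k,
{J_i,x_j} = ε_{ijk}x_k, {x_i,x_j} = −𝒫 ε_{ijk}J_k. -/
noncomputable def piSO4 (P : ℂ) : Fin 6 → Fin 6 → P6 := fun i j =>
  !![0, -(C P * X 5), C P * X 4, 0, X 2, -(X 1);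
     C P * X 5, 0, -(C P * X 3), -(X 2), 0, X 0;
     -(C P * X 4), C P * X 3, 0, X 1, -(X 0), 0;
     0, X 2, -(X 1), 0, X 5, -(X 4);
     -(X 2), 0, X 0, -(X 5), 0, X 3;
     X 1, -(X 0), 0, X 4, -(X 3), 0] i j

/-- The Hamiltonian H_1 = J_1² + J_2² + 2J_3² − 2b x_1. -/
noncomputable def H1p (b : ℂ) : P6 :=
  X 3 ^ 2 + X 4 ^ 2 + 2 * X 5 ^ 2 - C (2 * b) * X 0

/-- The second integral H_2 = (J_+² + 2b x_+ − 𝒫b²)(J_−² + 2b x_− − 𝒫b²),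
with J_± = J_1 ± iJ_2 and x_± = x_1 ± ix_2. -/
noncomputable def H2p (b P : ℂ) : P6 :=
  ((X 3 + C Complex.I * X 4) ^ 2 + C (2 * b) * (X 0 + C Complex.I * X 1) - C (P * b ^ 2)) *
    ((X 3 - C Complex.I * X 4) ^ 2 + C (2 * b) * (X 0 - C Complex.I * X 1) - C (P * b ^ 2))

theorem H2p_eq (b P : ℂ) : H2p b P =
    (X 3 * X 3 - X 4 * X 4 + C (2 * b) * X 0 - C (P * b ^ 2)) *
      (X 3 * X 3 - X 4 * X 4 + C (2 * b) * X 0 - C (P * b ^ 2)) +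
    (2 * (X 3 * X 4) + C (2 * b) * X 1) * (2 * (X 3 * X 4) + C (2 * b) * X 1) := by
  have hI : (C Complex.I : P6) * C Complex.I = -1 := by
    rw [← C_mul, Complex.I_mul_I]; simp
  unfold H2p
  generalize (C Complex.I : P6) = i at *
  generalize (C (2 * b) : P6) = B
  generalize (C (P * b ^ 2) : P6) = D
  have h : ((X 3 + i * X 4) ^ 2 + B * (X 0 + i * X 1) - D : P6) =
      (X 3 * X 3 - X 4 * X 4 + B * X 0 - D) + i * (2 * (X 3 * X 4) + B * X 1) := by
    linear_combination (X 4 ^ 2) * hI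
  have h' : ((X 3 - i * X 4) ^ 2 + B * (X 0 - i * X 1) - D : P6) =
      (X 3 * X 3 - X 4 * X 4 + B * X 0 - D) - i * (2 * (X 3 * X 4) + B * X 1) := by
    linear_combination (X 4 ^ 2) * hI
  rw [h, h']
  linear_combination (-(2 * (X 3 * X 4) + B * X 1) ^ 2) * hI

theorem statement9 (b P : ℂ) : sbr6 (piSO4 P) (H1p b) (H2p b P) = 0 := by
  have h2 : ∀ i : Fin 6, pderiv i (2 : P6) = 0 := fun i => by
    rw [show (2 : P6) = C 2 from (map_ofNat C 2).symm]; exact pderiv_C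
  rw [H2p_eq]
  simp [sbr6, piSO4, H1p, Fin.sum_univ_six, pderiv_X, Pi.single_apply, h2, Derivation.leibniz,
    Derivation.leibniz_pow, -map_mul, -C_mul, pderiv_C]
  simp only [C_mul, C_pow, map_ofNat]
  ring

end
end

section
/- For the Kowalevski top on so*(4), the entry B(λ) = λ⁵ + B_3λ³ + B_1λ of the Lax matrix coincides with the characteristic polynomial of the control matrix F in the variable λ²: as rational functions of (x_1,x_2,x_3,J_1,J_2,J_3), tr F = −B_3 and det F = B_1, so that λ⁴ + B_3λ² + B_1 = det(λ²·Id − F). -/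
/-!
STATEMENT 15: For the Kowalevski top on so*(4), the entry B(λ) = λ⁵ + B_3λ³ + B_1λ of the
Lax matrix coincides with the characteristic polynomial of the control matrix F in the
variable λ²: tr F = −B_3 and det F = B_1, so that λ⁴ + B_3λ² + B_1 = det(λ²·Id − F).
-/

set_option maxHeartbeats 1000000

noncomputable section

/-- The field ℂ(x_1,x_2,x_3,J_1,J_2,J_3) of rational functions in six variables. -/
abbrev Kw := FractionRing (MvPolynomial (Fin 6) ℂ)

/-- The coordinates: `zz 0, zz 1, zz 2` are x_1, x_2, x_3 and `zz 3, zz 4, zz 5`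
are J_1, J_2, J_3. -/
noncomputable def zz (i : Fin 6) : Kw :=
  algebraMap (MvPolynomial (Fin 6) ℂ) Kw (MvPolynomial.X i)

/-- The constants ℂ ⊆ ℂ(x_1,…,J_3). -/
noncomputable def cc (w : ℂ) : Kw := algebraMap ℂ Kw w

/-- X = (J_1J_3 + b x_3)/J_2. -/
noncomputable def KX (b : ℂ) : Kw := (zz 3 * zz 5 + cc b * zz 2) / zz 4

/-- H_1 = J_1² + J_2² + 2J_3² − 2b x_1. -/
noncomputable def KH1 (b : ℂ) : Kw := zz 3 ^ 2 + zz 4 ^ 2 + 2 * zz 5 ^ 2 - cc (2 * b) * zz 0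

/-- H_2 = (J_+² + 2b x_+ − 𝒫b²)(J_−² + 2b x_− − 𝒫b²). -/
noncomputable def KH2 (b P : ℂ) : Kw :=
  ((zz 3 + cc Complex.I * zz 4) ^ 2 + cc (2 * b) * (zz 0 + cc Complex.I * zz 1)
      - cc (P * b ^ 2)) *
    ((zz 3 - cc Complex.I * zz 4) ^ 2 + cc (2 * b) * (zz 0 - cc Complex.I * zz 1)
      - cc (P * b ^ 2))

/-- Q_1 = x_2J_3 − x_3J_2. -/
noncomputable def KQ1 : Kw := zz 1 * zz 5 - zz 2 * zz 4
/-- Q_2 = x_3J_1 − x_1J_3. -/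
noncomputable def KQ2 : Kw := zz 2 * zz 3 - zz 0 * zz 5
/-- Q_3 = x_1J_2 − x_2J_1. -/
noncomputable def KQ3 : Kw := zz 0 * zz 4 - zz 1 * zz 3

/-- Z_1 = x_3J_3 − x_2J_2 − 2x_1J_1 + x_2(J_1²−2J_3²)/J_2 + (J_3(b𝒫−2x_1)+x_3J_1)X/J_2. -/
noncomputable def KZ1 (b P : ℂ) : Kw :=
  zz 2 * zz 5 - zz 1 * zz 4 - 2 * zz 0 * zz 3 + zz 1 * (zz 3 ^ 2 - 2 * zz 5 ^ 2) / zz 4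
    + (zz 5 * (cc (b * P) - 2 * zz 0) + zz 2 * zz 3) * KX b / zz 4

/-- Z_2 = b²𝒫² + (H_1 − J_3²)𝒫. -/
noncomputable def KZ2 (b P : ℂ) : Kw := cc (b ^ 2 * P ^ 2) + (KH1 b - zz 5 ^ 2) * cc P

/-- 𝒞_1 = x_1J_1 + x_2J_2 + x_3J_3. -/
noncomputable def KC1 : Kw := zz 0 * zz 3 + zz 1 * zz 4 + zz 2 * zz 5

/-- 𝒞_2 = x_1² + x_2² + x_3² − 𝒫(J_1² + J_2² + J_3²). -/
noncomputable def KC2 (P : ℂ) : Kw :=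
  zz 0 ^ 2 + zz 1 ^ 2 + zz 2 ^ 2 - cc P * (zz 3 ^ 2 + zz 4 ^ 2 + zz 5 ^ 2)

/-- `D` is the Lie–Poisson bracket of so*(4): an antisymmetric biderivation of the field
ℂ(x_1,…,J_3) with {J_i,J_j}_0 = ε_{ijk}J_k, {J_i,x_j}_0 = ε_{ijk}x_k,
{x_i,x_j}_0 = −𝒫 ε_{ijk}J_k. -/
def IsKowBr0 (P : ℂ) (D : Kw → Derivation ℂ Kw Kw) : Prop :=
  (∀ f g : Kw, D f g = -(D g f)) ∧
  D (zz 3) (zz 4) = zz 5 ∧ D (zz 4) (zz 5) = zz 3 ∧ D (zz 5) (zz 3) = zz 4 ∧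
  D (zz 3) (zz 0) = 0 ∧ D (zz 3) (zz 1) = zz 2 ∧ D (zz 3) (zz 2) = -(zz 1) ∧
  D (zz 4) (zz 0) = -(zz 2) ∧ D (zz 4) (zz 1) = 0 ∧ D (zz 4) (zz 2) = zz 0 ∧
  D (zz 5) (zz 0) = zz 1 ∧ D (zz 5) (zz 1) = -(zz 0) ∧ D (zz 5) (zz 2) = 0 ∧
  D (zz 0) (zz 1) = -(cc P * zz 5) ∧ D (zz 1) (zz 2) = -(cc P * zz 3) ∧
  D (zz 2) (zz 0) = -(cc P * zz 4)

/-- `D` is the second Kowalevski bracket {·,·}_1: an antisymmetric biderivation of the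
field ℂ(x_1,…,J_3) with the indicated values on the coordinates. -/
def IsKowBr1 (b P : ℂ) (D : Kw → Derivation ℂ Kw Kw) : Prop :=
  (∀ f g : Kw, D f g = -(D g f)) ∧
  D (zz 3) (zz 4) = -(zz 5) * KX b ^ 2 - cc b * (zz 2 * zz 3 + zz 1 * KX b) ∧
  D (zz 3) (zz 5) = zz 4 * KX b ^ 2 - cc b * (zz 2 * zz 4 - zz 1 * zz 5) * KX b / zz 4
      + cc b * zz 1 * (2 * zz 3 * zz 4 + cc b * zz 1) / zz 4 ∧
  D (zz 4) (zz 5) = -(zz 3) * KX b ^ 2 - cc b * (zz 0 * zz 3 + zz 2 * zz 5)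
      - cc b * zz 1 * (zz 3 ^ 2 - zz 5 ^ 2 + cc b * zz 0) / zz 4 ∧
  D (zz 0) (zz 3) = -(2 * KQ1 * (cc b * (zz 1 * zz 4 + zz 2 * zz 5)
      + (zz 4 ^ 2 + zz 5 ^ 2) * zz 3)) / zz 4 ^ 2 ∧
  D (zz 0) (zz 4) = -(zz 2) * KX b ^ 2 + cc (b * P) * zz 4 * KX b
      + (KQ1 * (2 * zz 3 ^ 2 - KH1 b) - cc b * zz 1 * zz 2 * zz 3) / zz 4 ∧
  D (zz 0) (zz 5) = zz 1 * KX b ^ 2 - cc (b * P) * (zz 3 * zz 4 + cc b * zz 1)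
      + (KQ1 * (zz 3 * KX b + zz 4 * zz 5) + cc b * zz 1 ^ 2 * zz 3) / zz 4 ∧
  D (zz 1) (zz 3) = -(zz 2) * zz 3 ^ 2 - (cc b * zz 1 + zz 5 * KX b + zz 3 * zz 4)
      * ((cc (b * P) - 2 * zz 0) * zz 5 + zz 2 * zz 3) / zz 4 ∧
  D (zz 1) (zz 4) = -(KQ2 * (KH1 b - zz 3 ^ 2 + cc (b ^ 2 * P))
      + cc b * zz 5 * (cc P * zz 5 ^ 2 + zz 2 ^ 2)) / zz 4 ∧
  D (zz 1) (zz 5) = cc (b * P) * (zz 3 ^ 2 + zz 5 ^ 2)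
      + (KQ2 * (zz 4 * zz 5 + zz 3 * KX b)
        + (cc (b * P) - zz 0) * (cc b * zz 1 + zz 5 * KX b) * zz 3
        + cc b * zz 1 * zz 2 * zz 5) / zz 4 ∧
  D (zz 2) (zz 3) = zz 1 * zz 3 ^ 2
      + (cc b * (zz 1 * zz 4 + zz 2 * zz 5) + (zz 4 ^ 2 + zz 5 ^ 2) * zz 3)
        * (cc (b * P) - 2 * zz 0 + zz 1 * zz 3 / zz 4) / zz 4 ∧
  D (zz 2) (zz 4) = zz 0 * KX b ^ 2 - cc (b * P) * (cc b * zz 0 + zz 3 ^ 2 - zz 5 ^ 2)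
      + (KQ3 * (2 * zz 3 ^ 2 - KH1 b) + cc b * zz 1 * (zz 0 * zz 3 + zz 2 * zz 5)) / zz 4 ∧
  D (zz 2) (zz 5) = (KQ3 - cc (b * P) * zz 4) * (zz 4 * zz 5 + zz 3 * KX b) / zz 4
      - cc b * zz 1 * (zz 0 * KX b + zz 1 * zz 5) / zz 4 ∧
  D (zz 0) (zz 1) = KZ1 b P * zz 2 - KZ2 b P * zz 5 - cc (b * P) * zz 3 * KQ1 / zz 4 ∧
  D (zz 0) (zz 2) = -(KZ1 b P * zz 1 - KZ2 b P * zz 4) + cc (b * P) * KX b * KQ1 / zz 4 ∧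
  D (zz 1) (zz 2) = KZ1 b P * zz 0 - KZ2 b P * zz 3 + cc (b * P) * (zz 0 * zz 3 - zz 2 * zz 5)
      - cc (b * P) * zz 1 * (zz 3 ^ 2 - zz 5 ^ 2) / zz 4


/-- B_3 = X² − J² + 2bx_1 − 𝒫b². -/
noncomputable def KB3 (b P : ℂ) : Kw :=
  KX b ^ 2 - (zz 3 ^ 2 + zz 4 ^ 2 + zz 5 ^ 2) + cc (2 * b) * zz 0 - cc (P * b ^ 2)

/-- B_1 = −J²X² − 2b(x_2J_3−x_3J_2)X − 2b𝒞_1J_1 − b²(x_2²+x_3²−𝒫J_1²). -/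
noncomputable def KB1 (b P : ℂ) : Kw :=
  -((zz 3 ^ 2 + zz 4 ^ 2 + zz 5 ^ 2) * KX b ^ 2)
    - cc (2 * b) * (zz 1 * zz 5 - zz 2 * zz 4) * KX b - cc (2 * b) * KC1 * zz 3
    - cc (b ^ 2) * (zz 1 ^ 2 + zz 2 ^ 2 - cc P * zz 3 ^ 2)

/-- Z_3 = H_2 − 2(b(b𝒫−2x_1)−J_1²)X² + 8bx_2J_3X + (2𝒫J_3²−2x_3²)b² + 4bQ_2J_3
+ 2(J_2²+2J_1²)J_3². -/
noncomputable def KZ3 (b P : ℂ) : Kw :=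
  KH2 b P - 2 * (cc b * (cc (b * P) - 2 * zz 0) - zz 3 ^ 2) * KX b ^ 2
    + 8 * cc b * zz 1 * zz 5 * KX b + (2 * cc P * zz 5 ^ 2 - 2 * zz 2 ^ 2) * cc (b ^ 2)
    + 4 * cc b * KQ2 * zz 5 + 2 * (zz 4 ^ 2 + 2 * zz 3 ^ 2) * zz 5 ^ 2

/-- The control matrix F = [[ (H_1+b²𝒫)/2 − X² − J_3², 1/4 ], [ Z_3, (H_1+b²𝒫)/2 ]]. -/
noncomputable def KF (b P : ℂ) : Matrix (Fin 2) (Fin 2) Kw :=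
  !![(KH1 b + cc (b ^ 2 * P)) / 2 - KX b ^ 2 - zz 5 ^ 2, 1 / 4;
     KZ3 b P, (KH1 b + cc (b ^ 2 * P)) / 2]

theorem kw_det_aux {K : Type*} [Field K] [CharZero K] (b P I x1 x2 x3 J1 J2 J3 X : K)
    (hI : I ^ 2 = -1) (hX : X * J2 = J1 * J3 + b * x3) :
    ((J1 ^ 2 + J2 ^ 2 + 2 * J3 ^ 2 - 2 * b * x1 + b ^ 2 * P) / 2 - X ^ 2 - J3 ^ 2)
      * ((J1 ^ 2 + J2 ^ 2 + 2 * J3 ^ 2 - 2 * b * x1 + b ^ 2 * P) / 2)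
    - 1 / 4 * (((J1 + I * J2) ^ 2 + 2 * b * (x1 + I * x2) - P * b ^ 2)
        * ((J1 - I * J2) ^ 2 + 2 * b * (x1 - I * x2) - P * b ^ 2)
      - 2 * (b * (b * P - 2 * x1) - J1 ^ 2) * X ^ 2
      + 8 * b * x2 * J3 * X + (2 * P * J3 ^ 2 - 2 * x3 ^ 2) * b ^ 2
      + 4 * b * (x3 * J1 - x1 * J3) * J3 + 2 * (J2 ^ 2 + 2 * J1 ^ 2) * J3 ^ 2)
    = -((J1 ^ 2 + J2 ^ 2 + J3 ^ 2) * X ^ 2)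
      - 2 * b * (x2 * J3 - x3 * J2) * X - 2 * b * (x1 * J1 + x2 * J2 + x3 * J3) * J1
      - b ^ 2 * (x2 ^ 2 + x3 ^ 2 - P * J1 ^ 2) := by
  have hH : ((J1 + I * J2) ^ 2 + 2 * b * (x1 + I * x2) - P * b ^ 2)
        * ((J1 - I * J2) ^ 2 + 2 * b * (x1 - I * x2) - P * b ^ 2)
      = (J1 ^ 2 - J2 ^ 2 + 2 * b * x1 - P * b ^ 2) ^ 2 + (2 * J1 * J2 + 2 * b * x2) ^ 2 := by
    have e1 : (J1 + I * J2) ^ 2 = J1 ^ 2 - J2 ^ 2 + 2 * I * J1 * J2 := by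
      linear_combination J2 ^ 2 * hI
    have e2 : (J1 - I * J2) ^ 2 = J1 ^ 2 - J2 ^ 2 - 2 * I * J1 * J2 := by
      linear_combination J2 ^ 2 * hI
    rw [e1, e2]
    linear_combination (-(2 * J1 * J2 + 2 * b * x2) ^ 2) * hI
  rw [hH]
  linear_combination (1 / 2 * (X * J2 + (J1 * J3 + b * x3)) - 2 * b * x3) * hX

theorem statement15 (b P : ℂ) :
    (KF b P).trace = -(KB3 b P) ∧
    (KF b P).det = KB1 b P ∧
    ∀ lam : Kw, lam ^ 4 + KB3 b P * lam ^ 2 + KB1 b P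
      = (lam ^ 2 • (1 : Matrix (Fin 2) (Fin 2) Kw) - KF b P).det := by
  have hJ : zz 4 ≠ 0 := by
    unfold zz
    rw [Ne, FaithfulSMul.algebraMap_eq_zero_iff]
    exact MvPolynomial.X_ne_zero _
  have hX : KX b * zz 4 = zz 3 * zz 5 + cc b * zz 2 := by
    unfold KX
    exact div_mul_cancel₀ _ hJ
  have hI : cc Complex.I ^ 2 = -1 := by
    unfold cc
    rw [← map_pow, Complex.I_sq, map_neg, map_one]
  have cm : ∀ u v : ℂ, cc (u * v) = cc u * cc v := fun u v => map_mul _ u v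
  have cp : ∀ u : ℂ, cc (u ^ 2) = cc u ^ 2 := fun u => map_pow _ u 2
  have c2 : cc 2 = 2 := map_ofNat _ 2
  have key := kw_det_aux (cc b) (cc P) (cc Complex.I) (zz 0) (zz 1) (zz 2) (zz 3) (zz 4) (zz 5)
    (KX b) hI hX
  have ht : (KF b P).trace = -(KB3 b P) := by
    rw [Matrix.trace_fin_two]
    simp only [KF, KB3, KH1, Matrix.of_apply, Matrix.cons_val', Matrix.cons_val_zero,
      Matrix.cons_val_one, Matrix.cons_val_fin_one, cm, cp, c2]
    ring
  have hd : (KF b P).det = KB1 b P := by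
    rw [KF, Matrix.det_fin_two_of]
    simp only [KZ3, KB1, KH1, KH2, KQ2, KC1, cm, cp, c2]
    linear_combination key
  refine ⟨ht, hd, fun lam => ?_⟩
  rw [← hd, show KB3 b P = -(KF b P).trace by rw [ht, neg_neg], Matrix.trace_fin_two,
    Matrix.det_fin_two, Matrix.det_fin_two]
  simp only [Matrix.sub_apply, Matrix.smul_apply, Matrix.one_apply_eq, smul_eq_mul,
    Matrix.one_apply_ne (show (0 : Fin 2) ≠ 1 by decide),
    Matrix.one_apply_ne (show (1 : Fin 2) ≠ 0 by decide)]
  ring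

end
end

section
/- For the Kowalevski top on so*(4), the coefficients B_3 and B_1 of the entry B(λ) of the Lax matrix Poisson commute with respect to the Lie–Poisson bracket of so*(4): {B_3, B_1}_0 = 0 as rational functions of (x_1,x_2,x_3,J_1,J_2,J_3); equivalently, {B(λ), B(μ)}_0 = 0 for B(λ) = λ⁵ + B_3λ³ + B_1λ. -/
/-!
STATEMENT 16: For the Kowalevski top on so*(4), the coefficients B_3 and B_1 of the entry
B(λ) = λ⁵ + B_3λ³ + B_1λ of the Lax matrix Poisson commute with respect to the Lie–Poisson
bracket of so*(4): {B_3, B_1}_0 = 0; equivalently {B(λ), B(μ)}_0 = 0.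
-/

set_option maxHeartbeats 1000000

noncomputable section

/-- B(λ) = λ⁵ + B_3λ³ + B_1λ. -/
noncomputable def KB (b P : ℂ) (lam : ℂ) : Kw :=
  cc lam ^ 5 + KB3 b P * cc lam ^ 3 + KB1 b P * cc lam

/-- The abstract computation. -/
theorem aux_main {F : Type*} [Field F] [Algebra ℂ F] (D : F → Derivation ℂ F F)
    (x1 x2 x3 J1 J2 J3 b P X : F) (hJ : J2 ≠ 0) (hX : X = (J1 * J3 + b * x3) / J2)
    (hb : ∀ f, D f b = 0) (hP : ∀ f, D f P = 0) (ha : ∀ f g, D f g = -(D g f))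
    (h34 : D J1 J2 = J3) (h45 : D J2 J3 = J1) (h53 : D J3 J1 = J2)
    (h30 : D J1 x1 = 0) (h31 : D J1 x2 = x3) (h32 : D J1 x3 = -x2)
    (h40 : D J2 x1 = -x3) (h41 : D J2 x2 = 0) (h42 : D J2 x3 = x1)
    (h50 : D J3 x1 = x2) (h51 : D J3 x2 = -x1) (h52 : D J3 x3 = 0)
    (h01 : D x1 x2 = -(P * J3)) (h12 : D x2 x3 = -(P * J1)) (h20 : D x3 x1 = -(P * J2))
    (hs : ∀ f, D f f = 0) (B3 B1 : F)
    (hB3 : B3 = X ^ 2 - (J1 ^ 2 + J2 ^ 2 + J3 ^ 2) + 2 * b * x1 - P * b ^ 2)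
    (hB1 : B1 = -((J1 ^ 2 + J2 ^ 2 + J3 ^ 2) * X ^ 2)
    - 2 * b * (x2 * J3 - x3 * J2) * X - 2 * b * (x1 * J1 + x2 * J2 + x3 * J3) * J1
    - b ^ 2 * (x2 ^ 2 + x3 ^ 2 - P * J1 ^ 2)) : D B3 B1 = 0 := by
  have hXJ : X * J2 = J1 * J3 + b * x3 := by rw [hX]; field_simp
  have dX : ∀ f, D f X = (J1 * D f J3 + J3 * D f J1 + b * D f x3 - X * D f J2) / J2 := by
    intro f
    have := congrArg (D f) hXJ
    simp only [Derivation.leibniz, map_add, smul_eq_mul, hb] at this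
    rw [eq_div_iff hJ]
    linear_combination this
  have two : ∀ f, D f (2 : F) = 0 := fun f => by
    simpa using (D f).map_natCast 2
  have d3 : ∀ f, D f B3 = 2 * X * D f X - (2 * J1 * D f J1 + 2 * J2 * D f J2 + 2 * J3 * D f J3)
      + 2 * b * D f x1 := by
    intro f
    rw [hB3]
    simp only [pow_two, Derivation.leibniz, map_add, map_sub, smul_eq_mul, hb, hP, two]
    ring
  have d1 : ∀ f, D f B1 = -((2 * J1 * D f J1 + 2 * J2 * D f J2 + 2 * J3 * D f J3) * X ^ 2)
      - (J1 ^ 2 + J2 ^ 2 + J3 ^ 2) * (2 * X * D f X)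
      - 2 * b * (x2 * D f J3 + J3 * D f x2 - x3 * D f J2 - J2 * D f x3) * X
      - 2 * b * (x2 * J3 - x3 * J2) * D f X
      - 2 * b * (x1 * D f J1 + J1 * D f x1 + x2 * D f J2 + J2 * D f x2
          + x3 * D f J3 + J3 * D f x3) * J1
      - 2 * b * (x1 * J1 + x2 * J2 + x3 * J3) * D f J1
      - b ^ 2 * (2 * x2 * D f x2 + 2 * x3 * D f x3 - P * (2 * J1 * D f J1)) := by
    intro f
    rw [hB1]
    simp only [pow_two, Derivation.leibniz, map_add, map_sub, map_neg, smul_eq_mul, hb, hP, two]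
    ring
  have h43 : D J2 J1 = -J3 := by rw [ha, h34]
  have h54 : D J3 J2 = -J1 := by rw [ha, h45]
  have h35 : D J1 J3 = -J2 := by rw [ha, h53]
  have h03 : D x1 J1 = 0 := by rw [ha, h30, neg_zero]
  have h13 : D x2 J1 = -x3 := by rw [ha, h31]
  have h23 : D x3 J1 = x2 := by rw [ha, h32, neg_neg]
  have h04 : D x1 J2 = x3 := by rw [ha, h40, neg_neg]
  have h14 : D x2 J2 = 0 := by rw [ha, h41, neg_zero]
  have h24 : D x3 J2 = -x1 := by rw [ha, h42]
  have h05 : D x1 J3 = -x2 := by rw [ha, h50]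
  have h15 : D x2 J3 = x1 := by rw [ha, h51, neg_neg]
  have h25 : D x3 J3 = 0 := by rw [ha, h52, neg_zero]
  have h10 : D x2 x1 = P * J3 := by rw [ha, h01, neg_neg]
  have h21 : D x3 x2 = P * J1 := by rw [ha, h12, neg_neg]
  have h02 : D x1 x3 = P * J2 := by rw [ha, h20, neg_neg]
  rw [d1 B3, dX B3, ha B3 J1, ha B3 J2, ha B3 J3, ha B3 x1, ha B3 x2, ha B3 x3]
  simp only [d3, dX, hs, h34, h45, h53, h30, h31, h32, h40, h41, h42, h50, h51, h52, h01, h12, h20,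
    h43, h54, h35, h03, h13, h23, h04, h14, h24, h05, h15, h25, h10, h21, h02]
  rw [hX]
  field_simp
  ring

theorem statement16 (b P : ℂ) (D0 : Kw → Derivation ℂ Kw Kw) (h0 : IsKowBr0 P D0) :
    D0 (KB3 b P) (KB1 b P) = 0 ∧
    ∀ lam mu : ℂ, D0 (KB b P lam) (KB b P mu) = 0 := by
  obtain ⟨ha, h34, h45, h53, h30, h31, h32, h40, h41, h42, h50, h51, h52, h01, h12, h20⟩ := h0
  have hc : ∀ (w : ℂ) (f : Kw), D0 f (cc w) = 0 := fun w f => (D0 f).map_algebraMap w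
  have hs : ∀ f : Kw, D0 f f = 0 := fun f => by
    have h := ha f f
    exact self_eq_neg.mp h
  have hJ : zz 4 ≠ 0 := by
    unfold zz
    rw [Ne, IsFractionRing.to_map_eq_zero_iff]
    exact MvPolynomial.X_ne_zero _
  have e2 : cc (2 * b) = 2 * cc b := by
    unfold cc
    rw [map_mul]
    congr 1
    exact map_ofNat (algebraMap ℂ Kw) 2
  have main : D0 (KB3 b P) (KB1 b P) = 0 := by
    refine aux_main D0 (zz 0) (zz 1) (zz 2) (zz 3) (zz 4) (zz 5) (cc b) (cc P) (KX b) hJ rfl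
      (hc b) (hc P) ha h34 h45 h53 h30 h31 h32 h40 h41 h42 h50 h51 h52 h01 h12 h20 hs _ _ ?_ ?_
    · simp only [KB3, e2]
      simp [cc]
    · simp only [KB1, KC1, e2]
      simp [cc]
  have main' : D0 (KB1 b P) (KB3 b P) = 0 := by rw [ha, main, neg_zero]
  refine ⟨main, fun lam mu => ?_⟩
  have exp : ∀ (f : Kw) (w : ℂ), D0 f (KB b P w)
      = cc w ^ 3 * D0 f (KB3 b P) + cc w * D0 f (KB1 b P) := by
    intro f w
    simp only [KB, map_add, Derivation.leibniz, Derivation.leibniz_pow, hc, smul_eq_mul,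
      smul_zero, mul_zero, zero_add, add_zero]
  rw [exp, ha _ (KB3 b P), ha _ (KB1 b P), exp, exp, hs, hs, main, main']
  simp

end
end
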